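/- arXiv:2002.08907 — 2 statements merged into one kernel-verified Lean document; each statement's English description precedes it below -/
import Mathlib

section
/- Let X ⊆ ℝⁿ be a nonempty compact convex set and f : ℝⁿ → ℝ twice continuously differentiable with μ·I ⪯ ∇²f(x) ⪯ L·I for all x ∈ X (0 < μ ≤ L) and with L₂-Lipschitz Hessian on X, with unique minimizer x* over X. Fix x_k ∈ X, a symmetric positive definite H_k, set η_k := max{λ_max(H_k⁻¹∇²f(x_k)), λ_max((∇²f(x_k))⁻¹H_k)}, and assume the accuracy condition η_k − 1 ≤ ω·‖x_k − x*‖² for a constant ω ≥ 0. Let x̃*_{k+1} := argmin_{x∈X} ( f(x_k) + ⟨∇f(x_k), x − x_k⟩ + ½‖x − x_k‖²_{H_k} ). Then ‖x̃*_{k+1} − x*‖ ≤ √( η_k²L₂²/(4μ²) + 2Lη_kω/μ ) · ‖x_k − x*‖². -/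
open Matrix
open scoped RealInnerProductSpace

/-- The largest (real) eigenvalue of a matrix, as the supremum of its real spectrum. -/
noncomputable def lamMax {n : ℕ} (M : Matrix (Fin n) (Fin n) ℝ) : ℝ :=
  sSup (spectrum ℝ M)

/-- The smallest (real) eigenvalue of a matrix, as the infimum of its real spectrum. -/
noncomputable def lamMin {n : ℕ} (M : Matrix (Fin n) (Fin n) ℝ) : ℝ :=
  sInf (spectrum ℝ M)

/-- Action of a matrix on a vector of Euclidean space. -/
noncomputable def mApply {n : ℕ} (H : Matrix (Fin n) (Fin n) ℝ)
    (v : EuclideanSpace ℝ (Fin n)) : EuclideanSpace ℝ (Fin n) :=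
  Matrix.toEuclideanCLM (𝕜 := ℝ) H v

/-- The squared matrix "norm" ‖v‖²_H := vᵀ H v. -/
noncomputable def qForm {n : ℕ} (H : Matrix (Fin n) (Fin n) ℝ)
    (v : EuclideanSpace ℝ (Fin n)) : ℝ :=
  ⟪v, mApply H v⟫

/-- Spectral (ℓ² operator) norm of a matrix. -/
noncomputable def mNorm {n : ℕ} (H : Matrix (Fin n) (Fin n) ℝ) : ℝ :=
  ‖Matrix.toEuclideanCLM (𝕜 := ℝ) H‖

/-!
Write `G`, `H` for the Hessian at `xk` and its approximation, `d = xk - xstar`, `e = xt - xstar` and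
`g = ∇f xk - ∇f xstar`.

The eigenvalue condition gives `G ≤ η H` and `H ≤ η G` (`qForm_le_lamMax_mul`). Adding the
variational inequalities of `xt` and `xstar` gives `⟪H e, e⟫ ≤ ⟪H d - g, e⟫`, that is, nonexpansiveness
of the `H`-projection: `‖e‖_H ≤ ‖d - H⁻¹ g‖_H`. Expanding the square and replacing `H` by `η G` and
`H⁻¹` by `η G⁻¹` yields
`‖e‖²_H ≤ η ‖G d - g‖²_{G⁻¹} + 2 (η - 1) ⟪g, d⟫` (`qForm_error_le`).
Taylor's theorem with Lipschitz Hessian bounds `‖G d - g‖` by `L₂ ‖d‖² / 2`, the Hessian upper bound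
gives `⟪g, d⟫ ≤ L ‖d‖²`, and `‖e‖² ≤ (η / μ) ‖e‖²_H` finishes the argument.
-/

section Aux

variable {n : ℕ}

local notation "E" => EuclideanSpace ℝ (Fin n)
local notation "M" => Matrix (Fin n) (Fin n) ℝ

/-! ### Matrices as operators and quadratic forms -/

lemma mApply_sub_left (A B : M) (v : E) : mApply (A - B) v = mApply A v - mApply B v := by
  simp [mApply]

lemma mApply_smul_left (c : ℝ) (A : M) (v : E) : mApply (c • A) v = c • mApply A v := by
  simp [mApply]

lemma mApply_one (v : E) : mApply (1 : M) v = v := by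
  simp [mApply]

lemma mApply_mul (A B : M) (v : E) : mApply (A * B) v = mApply A (mApply B v) := by
  simp [mApply]

lemma mApply_sub (A : M) (v w : E) : mApply A (v - w) = mApply A v - mApply A w := by
  simp [mApply]

lemma mApply_smul (A : M) (c : ℝ) (v : E) : mApply A (c • v) = c • mApply A v := by
  simp [mApply]

lemma mApply_symm {A : M} (hA : A.IsHermitian) (v w : E) :
    ⟪v, mApply A w⟫ = ⟪w, mApply A v⟫ := by
  have h : A.vecMul v.ofLp = A *ᵥ v.ofLp := by
    have hT : Aᵀ = A := by simpa [Matrix.IsHermitian] using hA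
    rw [← Matrix.mulVec_transpose, hT]
  rw [mApply, mApply, Matrix.inner_toEuclideanCLM, Matrix.inner_toEuclideanCLM,
    Matrix.dotProduct_mulVec, h, dotProduct_comm]

lemma qForm_nonneg {A : M} (hA : A.PosSemidef) (v : E) : 0 ≤ qForm A v := by
  have := hA.dotProduct_mulVec_nonneg v.ofLp
  rw [qForm, mApply, Matrix.inner_toEuclideanCLM]
  simpa using this

lemma qForm_pos {A : M} (hA : A.PosDef) {v : E} (hv : v ≠ 0) : 0 < qForm A v := by
  have := hA.dotProduct_mulVec_pos (x := v.ofLp) (by simpa using hv)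
  rw [qForm, mApply, Matrix.inner_toEuclideanCLM]
  simpa using this

lemma mApply_eq_zero_of_qForm {A : M} (hA : A.PosSemidef) {v : E} (h : qForm A v = 0) :
    mApply A v = 0 := by
  rw [qForm, mApply, Matrix.inner_toEuclideanCLM] at h
  have := (hA.dotProduct_mulVec_zero_iff v.ofLp).1 (by simpa using h)
  ext i
  simp [mApply, this]

lemma posSemidef_of_qForm {A : M} (hA : A.IsHermitian) (h : ∀ v : E, 0 ≤ qForm A v) :
    A.PosSemidef := by
  refine Matrix.PosSemidef.of_dotProduct_mulVec_nonneg hA fun x => ?_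
  have := h (WithLp.toLp 2 x)
  rw [qForm, mApply, Matrix.inner_toEuclideanCLM] at this
  simpa using this

lemma qForm_sub_left (A B : M) (v : E) : qForm (A - B) v = qForm A v - qForm B v := by
  rw [qForm, mApply_sub_left, inner_sub_right]; rfl

lemma qForm_smul_left (c : ℝ) (A : M) (v : E) : qForm (c • A) v = c * qForm A v := by
  rw [qForm, mApply_smul_left, inner_smul_right]; rfl

lemma qForm_one (v : E) : qForm (1 : M) v = ‖v‖ ^ 2 := by
  rw [qForm, mApply_one, real_inner_self_eq_norm_sq]

lemma qForm_smul (A : M) (c : ℝ) (v : E) : qForm A (c • v) = c ^ 2 * qForm A v := by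
  rw [qForm, mApply_smul, inner_smul_right, real_inner_smul_left, qForm]; ring

lemma qForm_sub {A : M} (hA : A.IsHermitian) (v w : E) :
    qForm A (v - w) = qForm A v - 2 * ⟪v, mApply A w⟫ + qForm A w := by
  simp only [qForm, mApply_sub, inner_sub_left, inner_sub_right]
  rw [mApply_symm hA w v]; ring

/-! ### Generalized Rayleigh quotients -/

lemma mem_spectrum_of_mApply {A : M} {c : ℝ} {v : E} (hv : v ≠ 0) (h : mApply A v = c • v) :
    c ∈ spectrum ℝ A := by
  rw [spectrum.mem_iff]
  intro hu
  obtain ⟨B, hB⟩ := hu.exists_left_inv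
  apply hv
  have h1 : mApply (algebraMap ℝ M c - A) v = 0 := by
    rw [mApply_sub_left, h, Algebra.algebraMap_eq_smul_one, mApply_smul_left, mApply_one, sub_self]
  have h2 := congrArg (fun C => mApply C v) hB
  simp only [mApply_mul, h1, mApply_one] at h2
  rw [← h2]; simp [mApply]

/-- The generalized Rayleigh quotient of `(G, H)` is at most `λ_max(H⁻¹ G)`: its maximum `c` over
the unit sphere is an eigenvalue of `H⁻¹ G`, since the positive semidefinite matrix `c H - G`
annihilates a maximizer. -/
lemma qForm_le_lamMax_mul {G H : M} (hG : G.IsHermitian) (hH : H.PosDef) (w : E) :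
    qForm G w ≤ lamMax (H⁻¹ * G) * qForm H w := by
  by_cases hw : w = 0
  · subst hw; simp [qForm]
  have : Nontrivial E := ⟨w, 0, hw⟩
  have hcont : ∀ A : M, Continuous fun v : E => qForm A v := fun A => by
    unfold qForm mApply; fun_prop
  have hne0 : ∀ v ∈ Metric.sphere (0 : E) 1, v ≠ 0 := fun v hv h0 => by
    simp [h0] at hv
  obtain ⟨v, hv, hmax⟩ := (isCompact_sphere (0 : E) 1).exists_isMaxOn
    (NormedSpace.sphere_nonempty.2 zero_le_one)
    (f := fun v => qForm G v / qForm H v)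
    ((hcont G).continuousOn.div (hcont H).continuousOn
      fun v hv => (qForm_pos hH (hne0 v hv)).ne')
  have hv0 := hne0 v hv
  obtain ⟨c, hc⟩ : ∃ c, c = qForm G v / qForm H v := ⟨_, rfl⟩
  have hle : ∀ u : E, qForm G u ≤ c * qForm H u := by
    intro u
    by_cases hu : u = 0
    · subst hu; simp [qForm]
    have hun : 0 < ‖u‖ := norm_pos_iff.2 hu
    have hm : ‖u‖⁻¹ • u ∈ Metric.sphere (0 : E) 1 := by
      simp [norm_smul, hun.ne']
    have h1 : qForm G (‖u‖⁻¹ • u) / qForm H (‖u‖⁻¹ • u) ≤ c := hc ▸ hmax hm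
    rw [qForm_smul, qForm_smul, mul_div_mul_left _ _ (by positivity),
      div_le_iff₀ (qForm_pos hH hu)] at h1
    exact h1
  have hherm : (c • H - G).IsHermitian := by
    refine Matrix.IsHermitian.sub ?_ hG
    have := hH.isHermitian
    rw [Matrix.IsHermitian] at this ⊢
    rw [Matrix.conjTranspose_smul, this]; simp
  have hpsd : (c • H - G).PosSemidef := posSemidef_of_qForm hherm fun u => by
    rw [qForm_sub_left, qForm_smul_left]; linarith [hle u]
  have hz : mApply (c • H - G) v = 0 := mApply_eq_zero_of_qForm hpsd (by
    rw [qForm_sub_left, qForm_smul_left, hc, div_mul_cancel₀ _ (qForm_pos hH hv0).ne', sub_self])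
  have hmem : c ∈ spectrum ℝ (H⁻¹ * G) := by
    refine mem_spectrum_of_mApply hv0 ?_
    rw [mApply_sub_left, mApply_smul_left, sub_eq_zero] at hz
    rw [mApply_mul, ← hz, mApply_smul, ← mApply_mul,
      Matrix.nonsing_inv_mul _ ((Matrix.isUnit_iff_isUnit_det _).1 hH.isUnit), mApply_one]
  have hcl : c ≤ lamMax (H⁻¹ * G) := le_csSup (Matrix.finite_spectrum _).bddAbove hmem
  exact (hle w).trans (mul_le_mul_of_nonneg_right hcl (qForm_pos hH hw).le)

/-! ### First-order optimality conditions -/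

/-- The first-order condition `⟪∇φ(x), y - x⟫ ≥ 0` at a minimizer of `φ` over a convex set. -/
lemma inner_nonneg_of_min {X : Set E} (hX : Convex ℝ X) {φ : E → ℝ} {φ' x y : E}
    (hφ : HasGradientAt φ φ' x) (hx : x ∈ X) (hy : y ∈ X) (hmin : ∀ w ∈ X, φ x ≤ φ w) :
    0 ≤ ⟪φ', y - x⟫ := by
  have h : IsMinOn φ X x := hmin
  simpa using h.localize.hasFDerivWithinAt_nonneg hφ.hasFDerivAt.hasFDerivWithinAt
    (sub_mem_posTangentConeAt_of_segment_subset (hX.segment_subset hx hy))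

lemma hasFDerivAt_model {F : Type*} [NormedAddCommGroup F] [InnerProductSpace ℝ F]
    (A : F →L[ℝ] F) (hA : ∀ u v, ⟪u, A v⟫ = ⟪v, A u⟫) (a : ℝ) (p x₀ x : F) :
    HasFDerivAt (fun x => a + ⟪p, x - x₀⟫ + (1 / 2) * ⟪x - x₀, A (x - x₀)⟫)
      (innerSL ℝ (p + A (x - x₀))) x := by
  have h1 : HasFDerivAt (fun x : F => x - x₀) (ContinuousLinearMap.id ℝ F) x :=
    (hasFDerivAt_id x).sub_const x₀
  have h2 : HasFDerivAt (fun x : F => A (x - x₀)) A x := A.hasFDerivAt.comp x h1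
  have h3 : HasFDerivAt (fun x : F => ⟪p, x - x₀⟫) (innerSL ℝ p) x :=
    (innerSL ℝ p).hasFDerivAt.comp x h1
  have h4 := (h3.const_add a).add ((h1.inner ℝ h2).const_mul (1 / 2))
  refine HasFDerivAt.congr_fderiv h4 (ContinuousLinearMap.ext fun v => ?_)
  have h5 := hA (x - x₀) v
  have h6 := real_inner_comm v (A (x - x₀))
  generalize A (x - x₀) = b at *
  simp [h5, h6]
  ring

lemma hasGradientAt_model {H : M} (hH : H.IsHermitian) (a : ℝ) (p x₀ x : E) :
    HasGradientAt (fun x => a + ⟪p, x - x₀⟫ + (1 / 2) * qForm H (x - x₀))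
      (p + mApply H (x - x₀)) x := by
  rw [hasGradientAt_iff_hasFDerivAt]
  exact hasFDerivAt_model _ (mApply_symm hH) a p x₀ x

/-! ### The error estimate -/

/-- The error estimate in the `H`-norm, for matrices with `H ≤ η G` and `G ≤ η H`, from the
summed variational inequality `he`. -/
lemma qForm_error_le {G H : M} (hG : G.PosDef) (hH : H.PosDef) {η μ : ℝ} (hμ : 0 < μ) (hη : 0 ≤ η)
    (hGH : ∀ v : E, qForm G v ≤ η * qForm H v) (hHG : ∀ v : E, qForm H v ≤ η * qForm G v)
    (hGμ : ∀ v : E, μ * ‖v‖ ^ 2 ≤ qForm G v) {d e g : E}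
    (he : qForm H e ≤ ⟪e, mApply H d - g⟫) :
    qForm H e ≤ η * (‖mApply G d - g‖ ^ 2 / μ) + 2 * (η - 1) * ⟪d, g⟫ := by
  have inv : ∀ A : M, A.PosDef → mApply A (mApply A⁻¹ g) = g := fun A hA => by
    rw [← mApply_mul, Matrix.mul_nonsing_inv _ ((Matrix.isUnit_iff_isUnit_det _).1 hA.isUnit),
      mApply_one]
  obtain ⟨y, hy⟩ : ∃ y, mApply H y = g := ⟨_, inv H hH⟩
  obtain ⟨z, hz⟩ : ∃ z, mApply G z = g := ⟨_, inv G hG⟩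
  -- Cauchy-Schwarz in the `H`-inner product
  have h1 : qForm H e ≤ qForm H (d - y) := by
    have := qForm_nonneg hH.posSemidef (e - (d - y))
    rw [qForm_sub hH.isHermitian, mApply_sub, hy] at this
    linarith
  have h2 : qForm H (d - y) = qForm H d - 2 * ⟪d, g⟫ + ⟪y, g⟫ := by
    rw [qForm_sub hH.isHermitian, hy, qForm, qForm, hy]
  -- `H⁻¹ ≤ η G⁻¹` tested on `g`
  have h3 : ⟪y, g⟫ ≤ η * ⟪z, g⟫ := by
    have h := qForm_nonneg hG.posSemidef (y - η • z)
    rw [qForm_sub hG.isHermitian, mApply_smul, hz, qForm_smul, inner_smul_right,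
      show qForm G z = ⟪z, g⟫ by rw [qForm, hz]] at h
    have h' := hGH y
    rw [show qForm H y = ⟪y, g⟫ by rw [qForm, hy]] at h'
    rcases hη.eq_or_lt with h0 | h0
    · have := hHG y
      rw [show qForm H y = ⟪y, g⟫ by rw [qForm, hy], ← h0] at this
      rw [← h0]; linarith
    · have : 0 ≤ η * (η * ⟪z, g⟫ - ⟪y, g⟫) := by nlinarith
      linarith [nonneg_of_mul_nonneg_right this h0]
  have h4 : qForm G (d - z) = qForm G d - 2 * ⟪d, g⟫ + ⟪z, g⟫ := by
    rw [qForm_sub hG.isHermitian, hz, qForm, qForm, hz]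
  -- `‖r‖²_{G⁻¹} ≤ ‖r‖² / μ` for `r = G d - g`
  have h5 : qForm G (d - z) ≤ ‖mApply G d - g‖ ^ 2 / μ := by
    have ha := hGμ (d - z)
    have hb : qForm G (d - z) ≤ ‖d - z‖ * ‖mApply G d - g‖ := by
      rw [qForm, mApply_sub, hz]; exact real_inner_le_norm _ _
    rw [le_div_iff₀ hμ]
    nlinarith [sq_nonneg (μ * ‖d - z‖ - ‖mApply G d - g‖)]
  nlinarith [hHG d, mul_le_mul_of_nonneg_left h5 hη]

end Aux

/-- local quadratic convergence of the exact PVM step under the Hessian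
accuracy assumption `η_k − 1 ≤ ω‖x_k − x*‖²`:
`‖x̃*_{k+1} − x*‖ ≤ √(η_k²L₂²/(4μ²) + 2Lη_kω/μ)·‖x_k − x*‖²`. -/
theorem socgs_pvm_local_quadratic_exact {n : ℕ}
    (X : Set (EuclideanSpace ℝ (Fin n)))
    (hne : X.Nonempty) (hcomp : IsCompact X) (hconv : Convex ℝ X)
    (f : EuclideanSpace ℝ (Fin n) → ℝ) (hf : ContDiff ℝ 2 f)
    (Hess : EuclideanSpace ℝ (Fin n) → Matrix (Fin n) (Fin n) ℝ)
    (hHess : ∀ x, HasFDerivAt (gradient f) (Matrix.toEuclideanCLM (𝕜 := ℝ) (Hess x)) x)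
    (μ L : ℝ) (hμ : 0 < μ) (hμL : μ ≤ L)
    (hbound : ∀ x ∈ X, (Hess x - μ • (1 : Matrix (Fin n) (Fin n) ℝ)).PosSemidef ∧
      (L • (1 : Matrix (Fin n) (Fin n) ℝ) - Hess x).PosSemidef)
    (L₂ : ℝ) (hL₂ : 0 < L₂)
    (hLip : ∀ x ∈ X, ∀ y ∈ X, mNorm (Hess x - Hess y) ≤ L₂ * ‖x - y‖)
    (xstar : EuclideanSpace ℝ (Fin n)) (hxstar : xstar ∈ X)
    (hminstar : ∀ y ∈ X, f xstar ≤ f y)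
    (huniq : ∀ z ∈ X, (∀ y ∈ X, f z ≤ f y) → z = xstar)
    (xk : EuclideanSpace ℝ (Fin n)) (hxk : xk ∈ X)
    (Hk : Matrix (Fin n) (Fin n) ℝ) (hHk : Hk.PosDef)
    (ηk : ℝ) (hηk : ηk = max (lamMax (Hk⁻¹ * Hess xk)) (lamMax ((Hess xk)⁻¹ * Hk)))
    (ω : ℝ) (hω : 0 ≤ ω) (hacc : ηk - 1 ≤ ω * ‖xk - xstar‖ ^ 2)
    (fhat : EuclideanSpace ℝ (Fin n) → ℝ)
    (hfhat : ∀ x, fhat x =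
      f xk + ⟪gradient f xk, x - xk⟫ + (1 / 2) * qForm Hk (x - xk))
    (xt : EuclideanSpace ℝ (Fin n)) (hxtX : xt ∈ X)
    (hxtmin : ∀ w ∈ X, fhat xt ≤ fhat w) :
    ‖xt - xstar‖ ≤
      Real.sqrt (ηk ^ 2 * L₂ ^ 2 / (4 * μ ^ 2) + 2 * L * ηk * ω / μ) *
        ‖xk - xstar‖ ^ 2 := by
  rcases subsingleton_or_nontrivial (EuclideanSpace ℝ (Fin n)) with hsub | hnt
  · rw [Subsingleton.elim xt xstar, sub_self, norm_zero]; positivity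
  have hlow : ∀ x ∈ X, ∀ v, μ * ‖v‖ ^ 2 ≤ qForm (Hess x) v := fun x hx v => by
    have := qForm_nonneg (hbound x hx).1 v
    rw [qForm_sub_left, qForm_smul_left, qForm_one] at this; linarith
  have hup : ∀ x ∈ X, ∀ v, qForm (Hess x) v ≤ L * ‖v‖ ^ 2 := fun x hx v => by
    have := qForm_nonneg (hbound x hx).2 v
    rw [qForm_sub_left, qForm_smul_left, qForm_one] at this; linarith
  have hGpd : (Hess xk).PosDef := by
    have := (Matrix.PosDef.one (n := Fin n) (R := ℝ)).smul hμ
    simpa using this.add_posSemidef (hbound xk hxk).1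
  have hGH : ∀ v, qForm (Hess xk) v ≤ ηk * qForm Hk v := fun v =>
    (qForm_le_lamMax_mul hGpd.isHermitian hHk v).trans
      (mul_le_mul_of_nonneg_right (hηk ▸ le_max_left _ _) (qForm_nonneg hHk.posSemidef v))
  have hHG : ∀ v, qForm Hk v ≤ ηk * qForm (Hess xk) v := fun v =>
    (qForm_le_lamMax_mul hHk.isHermitian hGpd v).trans
      (mul_le_mul_of_nonneg_right (hηk ▸ le_max_right _ _) (qForm_nonneg hGpd.posSemidef v))
  have hη0 : 0 < ηk := by
    obtain ⟨v, hv⟩ := exists_ne (0 : EuclideanSpace ℝ (Fin n))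
    have h1 := qForm_pos hGpd hv
    exact pos_of_mul_pos_left (h1.trans_le (hGH v)) (qForm_pos hHk hv).le
  -- `G ≤ ηk H ≤ ηk² G`
  have hη1 : 1 ≤ ηk := by
    obtain ⟨v, hv⟩ := exists_ne (0 : EuclideanSpace ℝ (Fin n))
    have h1 := qForm_pos hGpd hv
    have h2 := (hGH v).trans (mul_le_mul_of_nonneg_left (hHG v) hη0.le)
    by_contra hlt
    push Not at hlt
    nlinarith [mul_pos hη0 h1, mul_pos h1 (sub_pos.2 hlt)]
  obtain ⟨d, hd⟩ : ∃ d, d = xk - xstar := ⟨_, rfl⟩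
  obtain ⟨e, he⟩ : ∃ e, e = xt - xstar := ⟨_, rfl⟩
  obtain ⟨g, hg⟩ : ∃ g, g = gradient f xk - gradient f xstar := ⟨_, rfl⟩
  have hgrad : ∀ x, HasGradientAt f (gradient f x) x := fun x =>
    ((hf.differentiable (by norm_num)) x).hasGradientAt
  have hvar : qForm Hk e ≤ ⟪e, mApply Hk d - g⟫ := by
    have h1 := inner_nonneg_of_min hconv (hgrad xstar) hxstar hxtX hminstar
    have h2 := inner_nonneg_of_min hconv
      (hasGradientAt_model hHk.isHermitian (f xk) (gradient f xk) xk xt) hxtX hxstar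
      (fun w hw => by simpa only [hfhat] using hxtmin w hw)
    have e1 : xt - xk = e - d := by rw [he, hd]; abel
    have e2 : xstar - xt = -e := by rw [he]; abel
    rw [e1, e2, inner_neg_right, mApply_sub, real_inner_comm] at h2
    rw [← he, real_inner_comm] at h1
    simp only [inner_add_right, inner_sub_right] at h2
    rw [hg, qForm]
    simp only [inner_sub_right]
    linarith
  -- the segment from `xk` to `xstar`, parametrized from `xk`
  have hseg : ∀ t ∈ Set.Icc (0 : ℝ) 1, xk - t • d ∈ X := fun t ht => by
    have := hconv hxk hxstar (sub_nonneg.2 ht.2) ht.1 (by ring)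
    convert this using 1
    rw [hd]; module
  have hend : xk - (1 : ℝ) • d = xstar := by rw [hd]; module
  have hder : ∀ t : ℝ, HasDerivAt (fun t : ℝ => gradient f (xk - t • d))
      (-mApply (Hess (xk - t • d)) d) t := fun t => by
    have h1 : HasDerivAt (fun t : ℝ => xk - t • d) (-d) t := by
      simpa using ((hasDerivAt_id t).smul_const d).const_sub xk
    have h2 := (hHess (xk - t • d)).comp_hasDerivAt t h1
    rw [map_neg] at h2
    exact h2
  have htaylor : ‖mApply (Hess xk) d - g‖ ≤ L₂ / 2 * ‖d‖ ^ 2 := by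
    have hF : ∀ t : ℝ, HasDerivAt
        (fun t : ℝ => gradient f (xk - t • d) - gradient f xk + t • mApply (Hess xk) d)
        (-mApply (Hess (xk - t • d)) d + mApply (Hess xk) d) t := fun t => by
      have h1 := ((hder t).sub_const (gradient f xk)).add
        ((hasDerivAt_id t).smul_const (mApply (Hess xk) d))
      rw [one_smul] at h1
      exact h1
    have hB : ∀ t : ℝ, HasDerivAt (fun t : ℝ => L₂ * ‖d‖ ^ 2 * (t ^ 2 / 2))
        (L₂ * ‖d‖ ^ 2 * t) t := fun t => by
      have := ((hasDerivAt_pow 2 t).div_const 2).const_mul (L₂ * ‖d‖ ^ 2)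
      refine this.congr_deriv ?_
      push_cast
      ring
    have := image_norm_le_of_norm_deriv_right_le_deriv_boundary (a := 0) (b := 1)
      (fun t _ => (hF t).continuousAt.continuousWithinAt)
      (fun t _ => (hF t).hasDerivWithinAt) (by simp) hB
      (fun t ht => ?_) (Set.right_mem_Icc.2 zero_le_one)
    · rw [hend, one_smul] at this
      convert this using 1
      · congr 1; rw [hg]; abel
      · ring
    · rw [neg_add_eq_sub, ← mApply_sub_left]
      calc ‖mApply (Hess xk - Hess (xk - t • d)) d‖
          ≤ mNorm (Hess xk - Hess (xk - t • d)) * ‖d‖ := ContinuousLinearMap.le_opNorm _ _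
        _ ≤ L₂ * ‖xk - (xk - t • d)‖ * ‖d‖ :=
            mul_le_mul_of_nonneg_right (hLip _ hxk _ (hseg t ⟨ht.1, ht.2.le⟩)) (norm_nonneg _)
        _ = L₂ * ‖d‖ ^ 2 * t := by
            rw [sub_sub_cancel, norm_smul, Real.norm_of_nonneg ht.1]; ring
  have hgd : ⟪d, g⟫ ≤ L * ‖d‖ ^ 2 := by
    have hF : ∀ t : ℝ, HasDerivAt (fun t : ℝ => ⟪d, gradient f (xk - t • d)⟫)
        ⟪d, -mApply (Hess (xk - t • d)) d⟫ t := fun t => by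
      simpa using (hasDerivAt_const t d).inner ℝ (hder t)
    obtain ⟨c, hc, hceq⟩ := exists_hasDerivAt_eq_slope _ _ (zero_lt_one (α := ℝ))
      (fun t _ => (hF t).continuousAt.continuousWithinAt) (fun t _ => hF t)
    rw [hend, zero_smul, sub_zero, sub_zero, div_one, inner_neg_right] at hceq
    have := hup _ (hseg c ⟨hc.1.le, hc.2.le⟩) d
    rw [qForm] at this
    rw [hg, inner_sub_right]
    linarith
  have hmain := qForm_error_le hGpd hHk hμ hη0.le hGH hHG (hlow xk hxk) hvar
  have hL : 0 < L := hμ.trans_le hμL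
  rw [← hd] at hacc
  rw [← hd, ← he]
  have hsq : ‖mApply (Hess xk) d - g‖ ^ 2 ≤ (L₂ / 2 * ‖d‖ ^ 2) ^ 2 :=
    pow_le_pow_left₀ (norm_nonneg _) htaylor 2
  have h1 : qForm Hk e ≤ ηk * ((L₂ / 2 * ‖d‖ ^ 2) ^ 2 / μ)
      + 2 * (ω * ‖d‖ ^ 2) * (L * ‖d‖ ^ 2) := by
    have ha : ηk * (‖mApply (Hess xk) d - g‖ ^ 2 / μ) ≤ ηk * ((L₂ / 2 * ‖d‖ ^ 2) ^ 2 / μ) := by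
      gcongr
    have hb : (ηk - 1) * ⟪d, g⟫ ≤ (ω * ‖d‖ ^ 2) * (L * ‖d‖ ^ 2) :=
      (mul_le_mul_of_nonneg_left hgd (sub_nonneg.2 hη1)).trans
        (mul_le_mul_of_nonneg_right hacc (by positivity))
    linarith
  have h2 : ‖e‖ ^ 2 ≤ (ηk ^ 2 * L₂ ^ 2 / (4 * μ ^ 2) + 2 * L * ηk * ω / μ) * (‖d‖ ^ 2) ^ 2 := by
    have h3 : μ * ‖e‖ ^ 2 ≤ ηk * qForm Hk e := (hlow xk hxk e).trans (hGH e)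
    have h4 : ‖e‖ ^ 2 ≤ ηk * qForm Hk e / μ := by
      rw [le_div_iff₀ hμ]; linarith
    refine h4.trans ((div_le_div_of_nonneg_right
      (mul_le_mul_of_nonneg_left h1 hη0.le) hμ.le).trans_eq ?_)
    field_simp
    ring
  rw [← Real.sqrt_sq (norm_nonneg e)]
  refine (Real.sqrt_le_sqrt h2).trans_eq ?_
  rw [Real.sqrt_mul (by positivity), Real.sqrt_sq (by positivity)]
end

section
/- Let X ⊆ ℝⁿ be a nonempty compact convex set and f : ℝⁿ → ℝ twice continuously differentiable with μ·I ⪯ ∇²f(x) ⪯ L·I for all x ∈ X (0 < μ ≤ L) and with L₂-Lipschitz Hessian on X, with unique minimizer x* over X. Fix x_k ∈ X with x_k ≠ x*, a symmetric positive definite H_k, set η_k := max{λ_max(H_k⁻¹∇²f(x_k)), λ_max((∇²f(x_k))⁻¹H_k)}, and assume η_k − 1 ≤ ω·‖x_k − x*‖² for a constant ω ≥ 0. Let f̂_k(x) := f(x_k) + ⟨∇f(x_k), x − x_k⟩ + ½‖x − x_k‖²_{H_k} with minimizer x̃*_{k+1} over X, let lb satisfy 0 ≤ lb ≤ f(x_k)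 − f(x*), and let x̃_{k+1} ∈ X satisfy f̂_k(x̃_{k+1}) − f̂_k(x̃*_{k+1}) ≤ ( lb/‖∇f(x_k)‖ )⁴. If additionally ⟨∇f(x*), x̃_{k+1} − x*⟩ = 0 (as holds when x̃_{k+1} lies in the minimal face of X containing x* under strict complementarity), then f(x̃_{k+1}) − f(x*) ≤ (Lη_k/(2μ⁴)) · ( √(8μ)·(1 + √(Lω)) + √η_k·L₂ )² · ( f(x_k) − f(x*) )². -/
open Matrix
open scoped RealInnerProductSpace

/-!
Write `v = x* - x_k`, `u = x̂ - x*` with `x̂` the exact minimizer of the model, `P = H_k`,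
`Q = ∇²f(x_k)`, `η = η_k` and `h = f(x_k) - f(x*)`. Since `⟨∇f(x*), x̃ - x*⟩ = 0`, smoothness gives
`f(x̃) - f(x*) ≤ (L/2) ‖x̃ - x*‖²`, so the claim reduces to a bound on `‖x̃ - x*‖` which is linear
in `h`. The definition of `η` means `Q ⪯ η P` and `P ⪯ η Q` (`form_le_lamMax`).

* Distance from `x̃` to `x̂`: the model is strongly convex in the `P`-norm, and its optimality gap at
  `x̃` is at most `(h / 2μ)²` because `2 μ h ≤ ‖∇f(x_k)‖²`.
* Distance from `x̂` to `x*`: adding the optimality conditions at `x̂` and `x*` yields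
  `‖u‖²_P ≤ ⟨∇f(x*) - ∇f(x_k) - Q v, u⟩ + ⟨(Q - P) v, u⟩`. The first term is at most
  `(L₂/2) ‖v‖² ‖u‖` by Lipschitz continuity of the Hessian (`gradient_remainder_le`). For the second,
  the sharp bound `‖P⁻¹(Q - P)v‖_P ≤ ((η - 1)/√η) ‖v‖_Q` is needed (`form_pencil_le`); the cruder
  `-(η - 1) P ⪯ Q - P ⪯ (η - 1) P` would lose a factor growing with `η`. Then one of the two factors
  `√(η - 1)` is replaced by `√ω ‖v‖`, the other by `√η`.

Finally `‖v‖² ≤ 2h/μ` turns everything into multiples of `h` (`scalar_distance_bound`).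
-/

/-! ### Quadratic forms and generalized eigenvalues -/

lemma inner_toEuclideanCLM_comm {n : ℕ} {A : Matrix (Fin n) (Fin n) ℝ} (hA : A.IsHermitian)
    (x y : EuclideanSpace ℝ (Fin n)) :
    ⟪x, Matrix.toEuclideanCLM (𝕜 := ℝ) A y⟫ = ⟪y, Matrix.toEuclideanCLM (𝕜 := ℝ) A x⟫ := by
  have hT : Aᵀ = A := by simpa [Matrix.IsHermitian, Matrix.IsSymm] using hA
  rw [Matrix.inner_toEuclideanCLM, Matrix.inner_toEuclideanCLM, Matrix.dotProduct_mulVec,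
    ← Matrix.mulVec_transpose, hT, dotProduct_comm]

/-- A positive definite pencil satisfies `Q ⪯ λ_max(P⁻¹Q) P`: the maximum of the generalized
Rayleigh quotient `⟨v, Qv⟩ / ⟨v, Pv⟩` over the unit sphere is attained at an eigenvector of
`P⁻¹Q`, hence is bounded by the largest eigenvalue. -/
lemma form_le_lamMax {n : ℕ} {P Q : Matrix (Fin n) (Fin n) ℝ} (hP : P.PosDef)
    (hQ : Q.IsHermitian) (v : EuclideanSpace ℝ (Fin n)) :
    ⟪v, Matrix.toEuclideanCLM (𝕜 := ℝ) Q v⟫ ≤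
      lamMax (P⁻¹ * Q) * ⟪v, Matrix.toEuclideanCLM (𝕜 := ℝ) P v⟫ := by
  have hPpos : ∀ w : EuclideanSpace ℝ (Fin n), w ≠ 0 →
      0 < ⟪w, Matrix.toEuclideanCLM (𝕜 := ℝ) P w⟫ := by
    intro w hw
    rw [Matrix.inner_toEuclideanCLM]
    have := hP.dotProduct_mulVec_pos (x := w.ofLp) (by simpa using hw)
    simpa using this
  by_cases hv : v = 0
  · simp [hv]
  have hne : (Metric.sphere (0 : EuclideanSpace ℝ (Fin n)) 1).Nonempty := by
    refine ⟨‖v‖⁻¹ • v, ?_⟩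
    simp [norm_smul, hv]
  have hcont : ContinuousOn (fun w : EuclideanSpace ℝ (Fin n) =>
      ⟪w, Matrix.toEuclideanCLM (𝕜 := ℝ) Q w⟫ / ⟪w, Matrix.toEuclideanCLM (𝕜 := ℝ) P w⟫)
      (Metric.sphere 0 1) := by
    apply ContinuousOn.div
    · fun_prop
    · fun_prop
    · intro w hw
      refine (hPpos w ?_).ne'
      rintro rfl
      simp at hw
  obtain ⟨w, hw, hmax⟩ := (isCompact_sphere _ _).exists_isMaxOn hne hcont
  have hw0 : w ≠ 0 := by
    rintro rfl
    simp at hw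
  set ρ := ⟪w, Matrix.toEuclideanCLM (𝕜 := ℝ) Q w⟫ / ⟪w, Matrix.toEuclideanCLM (𝕜 := ℝ) P w⟫
    with hρ
  have hρw : ⟪w, Matrix.toEuclideanCLM (𝕜 := ℝ) Q w⟫
      = ρ * ⟪w, Matrix.toEuclideanCLM (𝕜 := ℝ) P w⟫ := by
    rw [hρ, div_mul_cancel₀ _ (hPpos w hw0).ne']
  have hall : ∀ z : EuclideanSpace ℝ (Fin n), ⟪z, Matrix.toEuclideanCLM (𝕜 := ℝ) Q z⟫ ≤
      ρ * ⟪z, Matrix.toEuclideanCLM (𝕜 := ℝ) P z⟫ := by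
    intro z
    by_cases hz : z = 0
    · simp [hz]
    have h1 := hmax (a := ‖z‖⁻¹ • z) (by simp [norm_smul, hz])
    have hzn : (‖z‖⁻¹ * ‖z‖⁻¹) ≠ 0 := by simp [hz]
    simp only [map_smul, inner_smul_left, inner_smul_right, Set.mem_ofPred_eq, ← mul_assoc,
      conj_trivial] at h1
    rw [mul_div_mul_left _ _ hzn, div_le_iff₀ (hPpos z hz)] at h1
    exact h1
  have hpsd : (ρ • P - Q).PosSemidef := by
    refine Matrix.PosSemidef.of_dotProduct_mulVec_nonneg ?_ ?_
    · exact (hP.isHermitian.smul (by simp [IsSelfAdjoint])).sub hQ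
    · intro x
      have := hall (WithLp.toLp 2 x)
      rw [Matrix.inner_toEuclideanCLM, Matrix.inner_toEuclideanCLM] at this
      simp only [Matrix.sub_mulVec, Matrix.smul_mulVec, dotProduct_sub, dotProduct_smul,
        star_trivial, smul_eq_mul]
      linarith
  have hker : (ρ • P - Q) *ᵥ w.ofLp = 0 := by
    rw [← hpsd.dotProduct_mulVec_zero_iff]
    rw [Matrix.inner_toEuclideanCLM, Matrix.inner_toEuclideanCLM] at hρw
    simp only [Matrix.sub_mulVec, Matrix.smul_mulVec, dotProduct_sub, dotProduct_smul,
        star_trivial, smul_eq_mul]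
    linarith
  have heig : ρ ∈ spectrum ℝ (P⁻¹ * Q) := by
    rw [← Matrix.spectrum_toLin', ← Module.End.hasEigenvalue_iff_mem_spectrum]
    refine Module.End.hasEigenvalue_of_hasEigenvector (x := w.ofLp)
      ⟨Module.End.mem_eigenspace_iff.2 ?_, by simpa using hw0⟩
    rw [Matrix.sub_mulVec, sub_eq_zero, Matrix.smul_mulVec] at hker
    rw [Matrix.toLin'_apply, ← Matrix.mulVec_mulVec, ← hker, Matrix.mulVec_smul,
      Matrix.mulVec_mulVec, Matrix.nonsing_inv_mul _ ((Matrix.isUnit_iff_isUnit_det _).1 hP.isUnit),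
      Matrix.one_mulVec]
  have hle : ρ ≤ lamMax (P⁻¹ * Q) :=
    le_csSup (Matrix.finite_real_spectrum).bddAbove heig
  exact (hall v).trans (mul_le_mul_of_nonneg_right hle (hPpos v hv).le)

/-- Cauchy–Schwarz for a symmetric positive semidefinite operator. -/
lemma inner_sq_le_form {E : Type*} [NormedAddCommGroup E] [InnerProductSpace ℝ E]
    {P : E →L[ℝ] E} (hsym : ∀ x y, ⟪x, P y⟫ = ⟪y, P x⟫) (hpos : ∀ x, 0 ≤ ⟪x, P x⟫) (u r : E) :
    ⟪u, P r⟫ ^ 2 ≤ ⟪u, P u⟫ * ⟪r, P r⟫ := by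
  have h : ∀ t : ℝ, 0 ≤ ⟪r, P r⟫ * (t * t) + (2 * ⟪u, P r⟫) * t + ⟪u, P u⟫ := by
    intro t
    have h1 := hpos (u + t • r)
    simp only [map_add, map_smul, inner_add_left, inner_add_right, inner_smul_left,
      inner_smul_right, conj_trivial, hsym r u] at h1
    nlinarith
  have := discrim_le_zero h
  rw [discrim] at this
  nlinarith

/-- If `η⁻¹ P ⪯ Q ⪯ η P`, then the operator `P⁻¹(Q - P)` is bounded by `(η - 1) / √η` from the
`Q`-norm to the `P`-norm. Here `w` stands for `P⁻¹ Q v`. With `A = ηP - Q` and `B = Q - η⁻¹P`,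
the positivity of `⟨y, A y⟩ + ⟨z, B z⟩` at `y = w - η⁻¹ v`, `z = η v - w` is a multiple of the
inequality `A P⁻¹ B ⪰ 0` tested at `v`, which is the claim. -/
lemma form_pencil_le {E : Type*} [NormedAddCommGroup E] [InnerProductSpace ℝ E]
    {P Q : E →L[ℝ] E} (hPs : ∀ x y, ⟪x, P y⟫ = ⟪y, P x⟫) (hQs : ∀ x y, ⟪x, Q y⟫ = ⟪y, Q x⟫)
    {η : ℝ} (hη : 1 ≤ η) (hQP : ∀ x, ⟪x, Q x⟫ ≤ η * ⟪x, P x⟫)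
    (hPQ : ∀ x, ⟪x, P x⟫ ≤ η * ⟪x, Q x⟫) {v w : E} (hw : P w = Q v) :
    η * ⟪w - v, P (w - v)⟫ ≤ (η - 1) ^ 2 * ⟪v, Q v⟫ := by
  have e1 : ⟪w, P w⟫ = ⟪w, Q v⟫ := by rw [hw]
  have e2 : ⟪v, P w⟫ = ⟪v, Q v⟫ := by rw [hw]
  have e3 : ⟪w, P v⟫ = ⟪v, Q v⟫ := by rw [hPs, hw]
  rcases hη.eq_or_lt with rfl | hη
  · -- For `η = 1` the two forms agree on the diagonal, hence everywhere by polarization.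
    have hd : ∀ x, ⟪x, Q x⟫ = ⟪x, P x⟫ := fun x =>
      le_antisymm (by simpa using hQP x) (by simpa using hPQ x)
    have h1 := hd (w + v)
    simp only [map_add, inner_add_left, inner_add_right, hQs v w, e3, e2] at h1
    have h2 : ⟪w - v, P (w - v)⟫ = 0 := by
      simp only [map_sub, inner_sub_left, inner_sub_right, e3, e2]
      linarith [hd w, hd v]
    rw [h2]; simp
  · have hη0 : 0 < η := by linarith
    -- The vectors of the docstring are scaled by `η` and `1` to avoid inverses.
    have hA := hQP (η • w - v)
    have hB := hPQ (η • v - w)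
    simp only [map_sub, map_smul, inner_sub_left, inner_sub_right, inner_smul_left,
      inner_smul_right, conj_trivial, hQs v w, e3, e2, ← e1] at hA hB ⊢
    have key : 0 ≤ (η ^ 2 - 1) *
        ((η ^ 2 + 1) * ⟪v, Q v⟫ - η * ⟪w, P w⟫ - η * ⟪v, P v⟫) := by
      nlinarith
    have := nonneg_of_mul_nonneg_right key (by nlinarith)
    nlinarith

/-! ### Restriction to segments -/

lemma taylor_lower_of_le_deriv2 {φ φ' φ'' : ℝ → ℝ} {c : ℝ} (h1 : ∀ t, HasDerivAt φ (φ' t) t)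
    (h2 : ∀ t, HasDerivAt φ' (φ'' t) t) (hc : ∀ t ∈ Set.Icc (0 : ℝ) 1, c ≤ φ'' t) :
    φ 0 + φ' 0 + c / 2 ≤ φ 1 := by
  have m1 : MonotoneOn (fun t => φ' t - c * t) (Set.Icc 0 1) := by
    have hd : ∀ t, HasDerivAt (fun t => φ' t - c * t) (φ'' t - c) t := fun t => by
      simpa using (h2 t).fun_sub ((hasDerivAt_id t).const_mul c)
    refine monotoneOn_of_deriv_nonneg (convex_Icc 0 1)
      (fun t _ => (hd t).continuousAt.continuousWithinAt)
      (fun t _ => (hd t).differentiableAt.differentiableWithinAt) (fun t ht => ?_)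
    rw [(hd t).deriv]
    linarith [hc t (interior_subset ht)]
  have m2 : MonotoneOn (fun t => φ t - φ' 0 * t - c / 2 * t ^ 2) (Set.Icc 0 1) := by
    have hd : ∀ t, HasDerivAt (fun t => φ t - φ' 0 * t - c / 2 * t ^ 2) (φ' t - φ' 0 - c * t) t :=
      fun t => by
        have := ((h1 t).sub ((hasDerivAt_id t).const_mul (φ' 0))).sub
          ((hasDerivAt_pow 2 t).const_mul (c / 2))
        refine this.congr_deriv ?_
        norm_num
        ring
    refine monotoneOn_of_deriv_nonneg (convex_Icc 0 1)
      (fun t _ => (hd t).continuousAt.continuousWithinAt)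
      (fun t _ => (hd t).differentiableAt.differentiableWithinAt) (fun t ht => ?_)
    rw [(hd t).deriv]
    have ht := interior_subset ht
    have := m1 (Set.left_mem_Icc.2 zero_le_one) ht ht.1
    simp only [mul_zero] at this
    linarith
  have := m2 (Set.left_mem_Icc.2 zero_le_one) (Set.right_mem_Icc.2 zero_le_one) zero_le_one
  simp only at this
  linarith

lemma deriv_nonneg_of_left_min {φ : ℝ → ℝ} {a : ℝ} (h : HasDerivAt φ a 0)
    (hmin : ∀ t ∈ Set.Icc (0 : ℝ) 1, φ 0 ≤ φ t) : 0 ≤ a := by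
  have ht := (hasDerivWithinAt_iff_tendsto_slope' (s := Set.Ioi 0) (by simp)).1
    (h.hasDerivWithinAt (s := Set.Ioi 0))
  refine ge_of_tendsto ht ?_
  filter_upwards [Ioc_mem_nhdsGT (zero_lt_one (α := ℝ))] with t ht
  rw [slope_def_field]
  exact div_nonneg (sub_nonneg.2 (hmin t ⟨ht.1.le, ht.2⟩)) (by linarith [ht.1])

lemma abs_inner_toEuclideanCLM_le {n : ℕ} (A : Matrix (Fin n) (Fin n) ℝ)
    (x y : EuclideanSpace ℝ (Fin n)) :
    |⟪x, Matrix.toEuclideanCLM (𝕜 := ℝ) A y⟫| ≤ mNorm A * (‖x‖ * ‖y‖) := by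
  refine (abs_real_inner_le_norm _ _).trans ?_
  have := (Matrix.toEuclideanCLM (𝕜 := ℝ) A).le_opNorm y
  rw [mNorm]
  nlinarith [norm_nonneg x]

section Segment

variable {n : ℕ} {f : EuclideanSpace ℝ (Fin n) → ℝ}
  {Hess : EuclideanSpace ℝ (Fin n) → Matrix (Fin n) (Fin n) ℝ}

lemma hasDerivAt_line (hf : Differentiable ℝ f) (x d : EuclideanSpace ℝ (Fin n)) (t : ℝ) :
    HasDerivAt (fun t : ℝ => f (x + t • d)) ⟪gradient f (x + t • d), d⟫ t := by
  have hl : HasDerivAt (fun t : ℝ => x + t • d) d t := by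
    simpa using ((hasDerivAt_id t).smul_const d).const_add x
  have := (hf (x + t • d)).hasGradientAt.hasFDerivAt.comp_hasDerivAt t hl
  exact this.congr_deriv (by simp)

lemma hasDerivAt_gradient_line
    (hHess : ∀ x, HasFDerivAt (gradient f) (Matrix.toEuclideanCLM (𝕜 := ℝ) (Hess x)) x)
    (x d u : EuclideanSpace ℝ (Fin n)) (t : ℝ) :
    HasDerivAt (fun t : ℝ => ⟪gradient f (x + t • d), u⟫)
      ⟪u, Matrix.toEuclideanCLM (𝕜 := ℝ) (Hess (x + t • d)) d⟫ t := by
  have hl : HasDerivAt (fun t : ℝ => x + t • d) d t := by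
    simpa using ((hasDerivAt_id t).smul_const d).const_add x
  have h1 := (hHess (x + t • d)).comp_hasDerivAt t hl
  have h2 := h1.inner ℝ (hasDerivAt_const t u)
  simpa [real_inner_comm] using h2

lemma segment_mem {X : Set (EuclideanSpace ℝ (Fin n))} (hX : Convex ℝ X)
    {x y : EuclideanSpace ℝ (Fin n)} (hx : x ∈ X) (hy : y ∈ X) {t : ℝ}
    (ht : t ∈ Set.Icc (0 : ℝ) 1) : x + t • (y - x) ∈ X :=
  hX.add_smul_sub_mem hx hy ht

lemma quadratic_lower {X : Set (EuclideanSpace ℝ (Fin n))} (hX : Convex ℝ X)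
    (hf : Differentiable ℝ f)
    (hHess : ∀ x, HasFDerivAt (gradient f) (Matrix.toEuclideanCLM (𝕜 := ℝ) (Hess x)) x)
    {μ : ℝ} (hb : ∀ x ∈ X, ∀ v, μ * ‖v‖ ^ 2 ≤ ⟪v, Matrix.toEuclideanCLM (𝕜 := ℝ) (Hess x) v⟫)
    {x y : EuclideanSpace ℝ (Fin n)} (hx : x ∈ X) (hy : y ∈ X) :
    f x + ⟪gradient f x, y - x⟫ + μ / 2 * ‖y - x‖ ^ 2 ≤ f y := by
  have := taylor_lower_of_le_deriv2 (hasDerivAt_line hf x (y - x))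
    (hasDerivAt_gradient_line hHess x (y - x) (y - x)) (c := μ * ‖y - x‖ ^ 2)
    (fun t ht => hb _ (segment_mem hX hx hy ht) _)
  simp only [zero_smul, add_zero, one_smul, add_sub_cancel] at this
  linarith

lemma quadratic_upper {X : Set (EuclideanSpace ℝ (Fin n))} (hX : Convex ℝ X)
    (hf : Differentiable ℝ f)
    (hHess : ∀ x, HasFDerivAt (gradient f) (Matrix.toEuclideanCLM (𝕜 := ℝ) (Hess x)) x)
    {L : ℝ} (hb : ∀ x ∈ X, ∀ v, ⟪v, Matrix.toEuclideanCLM (𝕜 := ℝ) (Hess x) v⟫ ≤ L * ‖v‖ ^ 2)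
    {x y : EuclideanSpace ℝ (Fin n)} (hx : x ∈ X) (hy : y ∈ X) :
    f y ≤ f x + ⟪gradient f x, y - x⟫ + L / 2 * ‖y - x‖ ^ 2 := by
  have := taylor_lower_of_le_deriv2 (fun t => (hasDerivAt_line hf x (y - x) t).fun_neg)
    (fun t => (hasDerivAt_gradient_line hHess x (y - x) (y - x) t).fun_neg)
    (c := -(L * ‖y - x‖ ^ 2))
    (fun t ht => neg_le_neg (hb _ (segment_mem hX hx hy ht) _))
  simp only [zero_smul, add_zero, one_smul, add_sub_cancel] at this
  linarith

/-- The first-order Taylor remainder of the gradient is at most `L₂ / 2 · ‖y - x‖²`, tested against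
an arbitrary vector `u`. -/
lemma gradient_remainder_le {X : Set (EuclideanSpace ℝ (Fin n))} (hX : Convex ℝ X)
    (hHess : ∀ x, HasFDerivAt (gradient f) (Matrix.toEuclideanCLM (𝕜 := ℝ) (Hess x)) x)
    {L₂ : ℝ} (hLip : ∀ x ∈ X, ∀ y ∈ X, mNorm (Hess x - Hess y) ≤ L₂ * ‖x - y‖)
    {x y : EuclideanSpace ℝ (Fin n)} (hx : x ∈ X) (hy : y ∈ X) (u : EuclideanSpace ℝ (Fin n)) :
    ⟪gradient f y - gradient f x - Matrix.toEuclideanCLM (𝕜 := ℝ) (Hess x) (y - x), u⟫ ≤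
      L₂ / 2 * ‖y - x‖ ^ 2 * ‖u‖ := by
  set c := ⟪u, Matrix.toEuclideanCLM (𝕜 := ℝ) (Hess x) (y - x)⟫ with hc
  set K := L₂ * ‖y - x‖ ^ 2 * ‖u‖ with hK
  have hd : ∀ t : ℝ, HasDerivAt
      (fun t : ℝ => K / 2 * t ^ 2 + c * t - ⟪gradient f (x + t • (y - x)), u⟫)
      (K * t + c - ⟪u, Matrix.toEuclideanCLM (𝕜 := ℝ) (Hess (x + t • (y - x))) (y - x)⟫) t :=
    fun t => by
      have := (((hasDerivAt_pow 2 t).const_mul (K / 2)).add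
        ((hasDerivAt_id t).const_mul c)).sub (hasDerivAt_gradient_line hHess x (y - x) u t)
      refine this.congr_deriv ?_
      norm_num
      ring
  have hm : MonotoneOn
      (fun t : ℝ => K / 2 * t ^ 2 + c * t - ⟪gradient f (x + t • (y - x)), u⟫)
      (Set.Icc 0 1) := by
    refine monotoneOn_of_deriv_nonneg (convex_Icc 0 1)
      (fun t _ => (hd t).continuousAt.continuousWithinAt)
      (fun t _ => (hd t).differentiableAt.differentiableWithinAt) (fun t ht => ?_)
    rw [(hd t).deriv]
    have ht := interior_subset ht
    have h1 := (le_abs_self _).trans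
      (abs_inner_toEuclideanCLM_le (Hess (x + t • (y - x)) - Hess x) u (y - x))
    have h2 := hLip _ (segment_mem hX hx hy ht) _ hx
    rw [add_sub_cancel_left, norm_smul, Real.norm_of_nonneg ht.1] at h2
    have h3 := mul_le_mul_of_nonneg_right h2 (mul_nonneg (norm_nonneg u) (norm_nonneg (y - x)))
    rw [map_sub (Matrix.toEuclideanCLM (𝕜 := ℝ)), _root_.sub_apply, inner_sub_right, ← hc] at h1
    have h4 : L₂ * (t * ‖y - x‖) * (‖u‖ * ‖y - x‖) = K * t := by rw [hK]; ring
    linarith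
  have := hm (Set.left_mem_Icc.2 zero_le_one) (Set.right_mem_Icc.2 zero_le_one) zero_le_one
  simp only [zero_smul, add_zero, one_smul, add_sub_cancel] at this
  rw [inner_sub_left, inner_sub_left, real_inner_comm u (Matrix.toEuclideanCLM (𝕜 := ℝ) (Hess x) (y - x)), ← hc]
  linarith

lemma gradient_inner_nonneg_of_min {X : Set (EuclideanSpace ℝ (Fin n))} (hX : Convex ℝ X)
    (hf : Differentiable ℝ f) {x y : EuclideanSpace ℝ (Fin n)} (hx : x ∈ X) (hy : y ∈ X)
    (hmin : ∀ z ∈ X, f x ≤ f z) : 0 ≤ ⟪gradient f x, y - x⟫ := by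
  have h := hasDerivAt_line hf x (y - x) 0
  rw [zero_smul, add_zero] at h
  refine deriv_nonneg_of_left_min h (fun t ht => ?_)
  simpa using hmin _ (segment_mem hX hx hy ht)

end Segment

/-- First-order optimality of a constrained minimizer `x` of the model
`z ↦ ⟨g, z - x₀⟩ + ½⟨z - x₀, P (z - x₀)⟩`. -/
lemma model_optimality {E : Type*} [NormedAddCommGroup E] [InnerProductSpace ℝ E]
    {X : Set E} (hX : Convex ℝ X) {P : E →L[ℝ] E} (hsym : ∀ x y, ⟪x, P y⟫ = ⟪y, P x⟫)
    {x₀ g x y : E} (hx : x ∈ X) (hy : y ∈ X)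
    (hmin : ∀ z ∈ X, ⟪g, x - x₀⟫ + 1 / 2 * ⟪x - x₀, P (x - x₀)⟫ ≤
      ⟪g, z - x₀⟫ + 1 / 2 * ⟪z - x₀, P (z - x₀)⟫) :
    0 ≤ ⟪g, y - x⟫ + ⟪y - x, P (x - x₀)⟫ := by
  refine deriv_nonneg_of_left_min
    (φ := fun t => (⟪g, y - x⟫ + ⟪y - x, P (x - x₀)⟫) * t + 1 / 2 * ⟪y - x, P (y - x)⟫ * t ^ 2)
    ?_ (fun t ht => ?_)
  · have := ((hasDerivAt_id (0 : ℝ)).const_mul (⟪g, y - x⟫ + ⟪y - x, P (x - x₀)⟫)).add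
      ((hasDerivAt_pow 2 (0 : ℝ)).const_mul (1 / 2 * ⟪y - x, P (y - x)⟫))
    refine this.congr_deriv ?_
    simp
  · have h := hmin _ (hX.add_smul_sub_mem hx hy ht)
    have e : x + t • (y - x) - x₀ = (x - x₀) + t • (y - x) := by abel
    rw [e] at h
    generalize x - x₀ = p at *
    generalize y - x = q at *
    simp only [map_add, map_smul, inner_add_left, inner_add_right, inner_smul_left,
      inner_smul_right, conj_trivial, hsym p q] at h
    linarith

/-! ### Assembling the estimates -/

lemma mul_norm_sq_le_form {n : ℕ} {A : Matrix (Fin n) (Fin n) ℝ} {c : ℝ}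
    (h : (A - c • (1 : Matrix (Fin n) (Fin n) ℝ)).PosSemidef) (v : EuclideanSpace ℝ (Fin n)) :
    c * ‖v‖ ^ 2 ≤ ⟪v, Matrix.toEuclideanCLM (𝕜 := ℝ) A v⟫ := by
  have h1 := h.dotProduct_mulVec_nonneg v.ofLp
  rw [star_trivial, ← Matrix.inner_toEuclideanCLM, map_sub, map_smul, map_one, _root_.sub_apply,
    _root_.smul_apply, one_apply_eq_self, inner_sub_right, inner_smul_right,
    real_inner_self_eq_norm_sq] at h1
  linarith

lemma form_le_mul_norm_sq {n : ℕ} {A : Matrix (Fin n) (Fin n) ℝ} {c : ℝ}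
    (h : (c • (1 : Matrix (Fin n) (Fin n) ℝ) - A).PosSemidef) (v : EuclideanSpace ℝ (Fin n)) :
    ⟪v, Matrix.toEuclideanCLM (𝕜 := ℝ) A v⟫ ≤ c * ‖v‖ ^ 2 := by
  have h1 := h.dotProduct_mulVec_nonneg v.ofLp
  rw [star_trivial, ← Matrix.inner_toEuclideanCLM, map_sub, map_smul, map_one, _root_.sub_apply,
    _root_.smul_apply, one_apply_eq_self, inner_sub_right, inner_smul_right,
    real_inner_self_eq_norm_sq] at h1
  linarith

/-- The distance bound in terms of scalars: `V = ‖x_k - x*‖`, `U` is the distance from the exact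
model minimizer to `x*` and `a` its `H_k`-norm, `D` is the distance from the inexact to the exact
model minimizer, `b` is the `H_k`-norm of `H_k⁻¹(∇²f(x_k) - H_k)(x_k - x*)`, and `h` is the primal
gap at `x_k`. -/
lemma scalar_distance_bound {μ L L₂ η ω h V U D a b : ℝ} (hμ : 0 < μ) (hL : 0 < L)
    (hL₂ : 0 < L₂) (hη : 1 ≤ η) (hω : 0 ≤ ω) (hh : 0 ≤ h) (ha : 0 ≤ a)
    (hb : 0 ≤ b) (hV : μ / 2 * V ^ 2 ≤ h) (hacc : η - 1 ≤ ω * V ^ 2)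
    (hD : D ^ 2 ≤ η * h ^ 2 / (2 * μ ^ 3)) (hUa : μ * U ^ 2 ≤ η * a ^ 2)
    (hab : a ^ 2 ≤ L₂ / 2 * V ^ 2 * U + a * b) (hbb : η * b ^ 2 ≤ (η - 1) ^ 2 * (L * V ^ 2)) :
    U + D ≤ √η / μ ^ 2 * ((√(8 * μ) * (1 + √(L * ω)) + √η * L₂) * h) := by
  set s := √η with hs
  set m := √μ with hm
  set q := √(L * ω) with hq
  have hs2 : s ^ 2 = η := Real.sq_sqrt (by linarith)
  have hm2 : m ^ 2 = μ := Real.sq_sqrt hμ.le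
  have hq2 : q ^ 2 = L * ω := Real.sq_sqrt (by positivity)
  have hs0 : 0 < s := Real.sqrt_pos.2 (by linarith)
  have hm0 : 0 < m := Real.sqrt_pos.2 hμ
  have hq0 : 0 ≤ q := Real.sqrt_nonneg _
  have h8 : 2 * m ≤ √(8 * μ) := by
    apply Real.le_sqrt_of_sq_le
    nlinarith
  have hV2 : V ^ 2 ≤ 2 * h / μ := by
    rw [le_div_iff₀ hμ]; linarith
  have hUa' : U ≤ s / m * a := by
    apply le_of_sq_le_sq _ (by positivity)
    rw [mul_pow, div_pow, hs2, hm2, div_mul_eq_mul_div, le_div_iff₀ hμ]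
    linarith
  have ha' : a ≤ L₂ / 2 * V ^ 2 * (s / m) + b := by
    rcases ha.eq_or_lt with h0 | h0
    · rw [← h0]; positivity
    · have h1 : L₂ / 2 * V ^ 2 * U ≤ L₂ / 2 * V ^ 2 * (s / m * a) :=
        mul_le_mul_of_nonneg_left hUa' (by positivity)
      have h2 : a * a ≤ (L₂ / 2 * V ^ 2 * (s / m) + b) * a := by nlinarith
      exact le_of_mul_le_mul_right h2 h0
  have hsb : s * b ≤ 2 * q * s * h / μ := by
    apply le_of_sq_le_sq _ (by positivity)
    have e1 : (η - 1) ^ 2 ≤ η * (ω * V ^ 2) := by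
      nlinarith [mul_nonneg hω (sq_nonneg V)]
    have e2 : (V ^ 2) ^ 2 ≤ (2 * h / μ) ^ 2 := by gcongr
    calc (s * b) ^ 2 = η * b ^ 2 := by rw [mul_pow, hs2]
      _ ≤ (η - 1) ^ 2 * (L * V ^ 2) := hbb
      _ ≤ η * (ω * V ^ 2) * (L * V ^ 2) := by gcongr
      _ = η * (L * ω) * (V ^ 2) ^ 2 := by ring
      _ ≤ η * (L * ω) * (2 * h / μ) ^ 2 := by gcongr
      _ = (2 * q * s * h / μ) ^ 2 := by rw [← hs2, ← hq2]; ring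
  have hU : U ≤ s ^ 2 * L₂ * h / m ^ 4 + 2 * q * s * h / m ^ 3 := by
    calc U ≤ s / m * a := hUa'
      _ ≤ s / m * (L₂ / 2 * V ^ 2 * (s / m) + b) := by gcongr
      _ = s ^ 2 / m ^ 2 * (L₂ / 2) * V ^ 2 + (s * b) / m := by ring
      _ ≤ s ^ 2 / m ^ 2 * (L₂ / 2) * (2 * h / μ) + (2 * q * s * h / μ) / m := by gcongr
      _ = s ^ 2 * L₂ * h / m ^ 4 + 2 * q * s * h / m ^ 3 := by
        rw [← hm2]; field_simp
  have hD' : D ≤ s * h / m ^ 3 := by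
    apply le_of_sq_le_sq _ (by positivity)
    refine hD.trans ?_
    rw [← hs2, ← hm2, div_pow, mul_pow]
    apply div_le_div_of_nonneg_left (by positivity) (by positivity)
    nlinarith [pow_pos hm0 6]
  calc U + D ≤ s ^ 2 * L₂ * h / m ^ 4 + 2 * q * s * h / m ^ 3 + s * h / m ^ 3 := by linarith
    _ ≤ s ^ 2 * L₂ * h / m ^ 4 + 2 * q * s * h / m ^ 3 + 2 * (s * h / m ^ 3) := by
      have : 0 ≤ s * h / m ^ 3 := by positivity
      linarith
    _ = s / μ ^ 2 * ((2 * m * (1 + q) + s * L₂) * h) := by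
      rw [← hm2]; field_simp; ring
    _ ≤ s / μ ^ 2 * ((√(8 * μ) * (1 + q) + s * L₂) * h) := by gcongr

/-- quadratic convergence in primal gap of the inexact PVM step: under
the Hessian accuracy assumption, if in addition `⟨∇f(x*), x̃_{k+1} − x*⟩ = 0` (as holds
on the minimal face of `X` containing `x*` under strict complementarity), then
`f(x̃_{k+1}) − f(x*) ≤ (Lη_k/(2μ⁴))(√(8μ)(1 + √(Lω)) + √η_k·L₂)²(f(x_k) − f(x*))²`. -/
theorem socgs_inexact_pvm_primal_gap_quadratic {n : ℕ}
    (X : Set (EuclideanSpace ℝ (Fin n)))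
    (hne : X.Nonempty) (hcomp : IsCompact X) (hconv : Convex ℝ X)
    (f : EuclideanSpace ℝ (Fin n) → ℝ) (hf : ContDiff ℝ 2 f)
    (Hess : EuclideanSpace ℝ (Fin n) → Matrix (Fin n) (Fin n) ℝ)
    (hHess : ∀ x, HasFDerivAt (gradient f) (Matrix.toEuclideanCLM (𝕜 := ℝ) (Hess x)) x)
    (μ L : ℝ) (hμ : 0 < μ) (hμL : μ ≤ L)
    (hbound : ∀ x ∈ X, (Hess x - μ • (1 : Matrix (Fin n) (Fin n) ℝ)).PosSemidef ∧
      (L • (1 : Matrix (Fin n) (Fin n) ℝ) - Hess x).PosSemidef)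
    (L₂ : ℝ) (hL₂ : 0 < L₂)
    (hLip : ∀ x ∈ X, ∀ y ∈ X, mNorm (Hess x - Hess y) ≤ L₂ * ‖x - y‖)
    (xstar : EuclideanSpace ℝ (Fin n)) (hxstar : xstar ∈ X)
    (hminstar : ∀ y ∈ X, f xstar ≤ f y)
    (huniq : ∀ z ∈ X, (∀ y ∈ X, f z ≤ f y) → z = xstar)
    (xk : EuclideanSpace ℝ (Fin n)) (hxk : xk ∈ X) (hkne : xk ≠ xstar)
    (Hk : Matrix (Fin n) (Fin n) ℝ) (hHk : Hk.PosDef)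
    (ηk : ℝ) (hηk : ηk = max (lamMax (Hk⁻¹ * Hess xk)) (lamMax ((Hess xk)⁻¹ * Hk)))
    (ω : ℝ) (hω : 0 ≤ ω) (hacc : ηk - 1 ≤ ω * ‖xk - xstar‖ ^ 2)
    (fhat : EuclideanSpace ℝ (Fin n) → ℝ)
    (hfhat : ∀ x, fhat x =
      f xk + ⟪gradient f xk, x - xk⟫ + (1 / 2) * qForm Hk (x - xk))
    (xt : EuclideanSpace ℝ (Fin n)) (hxtX : xt ∈ X)
    (hxtmin : ∀ w ∈ X, fhat xt ≤ fhat w)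
    (lb : ℝ) (hlb0 : 0 ≤ lb) (hlb : lb ≤ f xk - f xstar)
    (xtil : EuclideanSpace ℝ (Fin n)) (hxtilX : xtil ∈ X)
    (hxtil : fhat xtil - fhat xt ≤ (lb / ‖gradient f xk‖) ^ 4)
    (horth : ⟪gradient f xstar, xtil - xstar⟫ = 0) :
    f xtil - f xstar ≤
      L * ηk / (2 * μ ^ 4) *
        (Real.sqrt (8 * μ) * (1 + Real.sqrt (L * ω)) + Real.sqrt ηk * L₂) ^ 2 *
        (f xk - f xstar) ^ 2 := by
  have hfd : Differentiable ℝ f := hf.differentiable (by norm_num)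
  have hlow : ∀ x ∈ X, ∀ v, μ * ‖v‖ ^ 2 ≤ ⟪v, Matrix.toEuclideanCLM (𝕜 := ℝ) (Hess x) v⟫ :=
    fun x hx => mul_norm_sq_le_form (hbound x hx).1
  have hupp : ∀ x ∈ X, ∀ v, ⟪v, Matrix.toEuclideanCLM (𝕜 := ℝ) (Hess x) v⟫ ≤ L * ‖v‖ ^ 2 :=
    fun x hx => form_le_mul_norm_sq (hbound x hx).2
  have hQherm : (Hess xk).IsHermitian := by
    have h1 : (μ • (1 : Matrix (Fin n) (Fin n) ℝ)).IsHermitian :=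
      Matrix.isHermitian_one.smul (by simp [IsSelfAdjoint])
    have := (hbound xk hxk).1.isHermitian.add h1
    rwa [sub_add_cancel] at this
  have hQpd : (Hess xk).PosDef := by
    refine Matrix.PosDef.of_dotProduct_mulVec_pos hQherm (fun {x} hx => ?_)
    have := hlow xk hxk (WithLp.toLp 2 x)
    rw [Matrix.inner_toEuclideanCLM] at this
    have h2 : 0 < ‖WithLp.toLp 2 x‖ := by simpa using hx
    exact lt_of_lt_of_le (by positivity) this
  have hPs := inner_toEuclideanCLM_comm hHk.isHermitian
  have hQs := inner_toEuclideanCLM_comm hQherm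
  have hPp : ∀ x, 0 ≤ ⟪x, Matrix.toEuclideanCLM (𝕜 := ℝ) Hk x⟫ := fun x => by
    rw [Matrix.inner_toEuclideanCLM]
    simpa using hHk.posSemidef.dotProduct_mulVec_nonneg x.ofLp
  have hQP : ∀ x, ⟪x, Matrix.toEuclideanCLM (𝕜 := ℝ) (Hess xk) x⟫ ≤
      ηk * ⟪x, Matrix.toEuclideanCLM (𝕜 := ℝ) Hk x⟫ := fun x =>
    (form_le_lamMax hHk hQherm x).trans
      (mul_le_mul_of_nonneg_right (hηk ▸ le_max_left _ _) (hPp x))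
  have hPQ : ∀ x, ⟪x, Matrix.toEuclideanCLM (𝕜 := ℝ) Hk x⟫ ≤
      ηk * ⟪x, Matrix.toEuclideanCLM (𝕜 := ℝ) (Hess xk) x⟫ := fun x =>
    (form_le_lamMax hQpd hHk.isHermitian x).trans
      (mul_le_mul_of_nonneg_right (hηk ▸ le_max_right _ _)
        (le_trans (by positivity) (hlow xk hxk x)))
  have hPQinv : ∀ v, Matrix.toEuclideanCLM (𝕜 := ℝ) Hk
      (Matrix.toEuclideanCLM (𝕜 := ℝ) (Hk⁻¹ * Hess xk) v) =
      Matrix.toEuclideanCLM (𝕜 := ℝ) (Hess xk) v := fun v => by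
    rw [← mul_apply_eq_comp, ← map_mul, ← Matrix.mul_assoc,
      Matrix.mul_nonsing_inv _ ((Matrix.isUnit_iff_isUnit_det _).1 hHk.isUnit), Matrix.one_mul]
  have hL : 0 < L := hμ.trans_le hμL
  have hv0 : 0 < ‖xstar - xk‖ := norm_pos_iff.2 (sub_ne_zero.2 hkne.symm)
  -- `0 < ⟨v, Qv⟩ ≤ η ⟨v, Pv⟩ ≤ η² ⟨v, Qv⟩` at the nonzero vector `v = x* - x_k`.
  have hη : 1 ≤ ηk := by
    have h1 := hQP (xstar - xk)
    have h2 := hPQ (xstar - xk)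
    have h3 : 0 < ⟪xstar - xk, Matrix.toEuclideanCLM (𝕜 := ℝ) (Hess xk) (xstar - xk)⟫ :=
      lt_of_lt_of_le (by positivity) (hlow xk hxk (xstar - xk))
    have h4 : 0 < ηk := pos_of_mul_pos_left (h3.trans_le h1) (hPp _)
    by_contra! h5
    have h6 : ηk * ηk < 1 := by nlinarith
    have h7 := mul_lt_mul_of_pos_right h6 h3
    linarith [mul_le_mul_of_nonneg_left h2 h4.le]
  set h := f xk - f xstar with hh
  have hstar : ∀ y ∈ X, 0 ≤ ⟪gradient f xstar, y - xstar⟫ := fun y hy =>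
    gradient_inner_nonneg_of_min hconv hfd hxstar hy hminstar
  have hV : μ / 2 * ‖xstar - xk‖ ^ 2 ≤ h := by
    have h1 := quadratic_lower hconv hfd hHess hlow hxstar hxk
    rw [norm_sub_rev]
    linarith [hstar xk hxk]
  have hh0 : 0 ≤ h := le_trans (by positivity) hV
  -- The accuracy of the subproblem, measured by the primal gap `h`, from `2 μ h ≤ ‖∇f(x_k)‖²`.
  have heps : (lb / ‖gradient f xk‖) ^ 4 ≤ (h / (2 * μ)) ^ 2 := by
    have h1 := quadratic_lower hconv hfd hHess hlow hxk hxstar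
    have h2 := neg_le_of_abs_le (abs_real_inner_le_norm (gradient f xk) (xstar - xk))
    have h3 : 2 * μ * h ≤ ‖gradient f xk‖ ^ 2 := by
      nlinarith [sq_nonneg (‖gradient f xk‖ - μ * ‖xstar - xk‖)]
    have h4 : (lb / ‖gradient f xk‖) ^ 2 ≤ h / (2 * μ) := by
      rcases (norm_nonneg (gradient f xk)).eq_or_lt with h5 | h5
      · rw [← h5]; simp only [div_zero, ne_eq, OfNat.ofNat_ne_zero, not_false_eq_true, zero_pow]
        positivity
      · rw [div_pow, div_le_div_iff₀ (by positivity) (by positivity)]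
        nlinarith [mul_le_mul hlb hlb hlb0 hh0]
    calc (lb / ‖gradient f xk‖) ^ 4 = ((lb / ‖gradient f xk‖) ^ 2) ^ 2 := by ring
      _ ≤ _ := by gcongr
  have hopt : ∀ y ∈ X, 0 ≤ ⟪gradient f xk, y - xt⟫ +
      ⟪y - xt, Matrix.toEuclideanCLM (𝕜 := ℝ) Hk (xt - xk)⟫ := fun y hy => by
    refine model_optimality hconv hPs hxtX hy (fun z hz => ?_)
    have := hxtmin z hz
    rw [hfhat, hfhat, qForm, qForm, mApply, mApply] at this
    linarith
  -- The model is 1-strongly convex in the `H_k`-norm.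
  have hD0 : 1 / 2 * ⟪xtil - xt, Matrix.toEuclideanCLM (𝕜 := ℝ) Hk (xtil - xt)⟫ ≤
      (h / (2 * μ)) ^ 2 := by
    have h1 := hopt xtil hxtilX
    have h2 := hxtil.trans heps
    rw [hfhat, hfhat, qForm, qForm, mApply, mApply] at h2
    have e : xtil - xk = (xtil - xt) + (xt - xk) := by abel
    rw [e] at h2
    generalize xtil - xt = p at *
    generalize xt - xk = r at *
    simp only [map_add, inner_add_left, inner_add_right, hPs r p] at h2
    linarith
  have hD : ‖xtil - xt‖ ^ 2 ≤ ηk * h ^ 2 / (2 * μ ^ 3) := by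
    have h1 := hlow xk hxk (xtil - xt)
    have h2 := hQP (xtil - xt)
    have h3 := mul_le_mul_of_nonneg_left hD0 (zero_le_one.trans hη)
    have h4 : μ * ‖xtil - xt‖ ^ 2 ≤ 2 * (ηk * (h / (2 * μ)) ^ 2) := by linarith
    have h5 : ηk * h ^ 2 / (2 * μ ^ 3) = 2 * (ηk * (h / (2 * μ)) ^ 2) / μ := by
      field_simp
    rw [h5, le_div_iff₀ hμ]
    linarith
  set u := xt - xstar with hu
  set v := xstar - xk with hv
  set w := Matrix.toEuclideanCLM (𝕜 := ℝ) (Hk⁻¹ * Hess xk) v with hw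
  have hpencil := form_pencil_le hPs hQs hη hQP hPQ (hPQinv v)
  rw [← hw] at hpencil
  have hCS := inner_sq_le_form hPs hPp u (w - v)
  set a := √⟪u, Matrix.toEuclideanCLM (𝕜 := ℝ) Hk u⟫ with ha
  set b := √⟪w - v, Matrix.toEuclideanCLM (𝕜 := ℝ) Hk (w - v)⟫ with hb
  have ha2 : a ^ 2 = ⟪u, Matrix.toEuclideanCLM (𝕜 := ℝ) Hk u⟫ := Real.sq_sqrt (hPp _)
  have hb2 : b ^ 2 = ⟪w - v, Matrix.toEuclideanCLM (𝕜 := ℝ) Hk (w - v)⟫ := Real.sq_sqrt (hPp _)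
  have hUa : μ * ‖u‖ ^ 2 ≤ ηk * a ^ 2 := by
    rw [ha2]; exact (hlow xk hxk u).trans (hQP u)
  have hbb : ηk * b ^ 2 ≤ (ηk - 1) ^ 2 * (L * ‖v‖ ^ 2) := by
    rw [hb2]
    exact hpencil.trans (mul_le_mul_of_nonneg_left (hupp xk hxk v) (sq_nonneg _))
  have hab : a ^ 2 ≤ L₂ / 2 * ‖v‖ ^ 2 * ‖u‖ + a * b := by
    have h1 : ⟪u, Matrix.toEuclideanCLM (𝕜 := ℝ) Hk (w - v)⟫ ≤ a * b := by
      apply le_of_sq_le_sq _ (by positivity)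
      rwa [mul_pow, ha2, hb2]
    have h2 := gradient_remainder_le hconv hHess hLip hxk hxstar u
    have h3 := hstar xt hxtX
    have h4 := hopt xstar hxstar
    have e1 : xstar - xt = -u := by rw [hu]; abel
    have e2 : xt - xk = u + v := by rw [hu, hv]; abel
    rw [e1, e2, inner_neg_left, inner_neg_right, map_add, inner_add_right] at h4
    rw [map_sub, inner_sub_right, hw, hPQinv] at h1
    rw [inner_sub_left, inner_sub_left, ← hv,
      real_inner_comm u (Matrix.toEuclideanCLM (𝕜 := ℝ) (Hess xk) v)] at h2
    rw [ha2]
    linarith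
  have hdist := scalar_distance_bound hμ hL hL₂ hη hω hh0 (Real.sqrt_nonneg _)
    (Real.sqrt_nonneg _) hV (by rwa [norm_sub_rev] at hacc) hD hUa hab hbb
  have hN : ‖xtil - xstar‖ ≤ ‖u‖ + ‖xtil - xt‖ := by
    have : xtil - xstar = u + (xtil - xt) := by rw [hu]; abel
    rw [this]; exact norm_add_le _ _
  have hfin := quadratic_upper hconv hfd hHess hupp hxstar hxtilX
  rw [horth] at hfin
  have hN2 := pow_le_pow_left₀ (norm_nonneg _) (hN.trans hdist) 2
  rw [mul_pow, div_pow, Real.sq_sqrt (by linarith : (0 : ℝ) ≤ ηk)] at hN2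
  calc f xtil - f xstar ≤ L / 2 * ‖xtil - xstar‖ ^ 2 := by linarith
    _ ≤ L / 2 * (ηk / (μ ^ 2) ^ 2 *
        ((√(8 * μ) * (1 + √(L * ω)) + √ηk * L₂) * h) ^ 2) := by gcongr
    _ = _ := by
      field_simp
end
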